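/- Let ℬ = {B_0,…,B_{n−1}} be a finite *-independent family. Then for every rational number q with 0 < q < 1 there exists an infinite set X_q ⊆ ℕ such that X_q has asymptotic density d(X_q) = q and ℬ ∪ {X_q} is a *-independent family. -/

import Mathlib

open Filter Set

/-- `cnt X n` is the number of elements of `X` below `n`, i.e. `|X ∩ {0,…,n−1}|`. -/
noncomputable def cnt (X : Set ℕ) (n : ℕ) : ℕ := Nat.card ↥(X ∩ Set.Iio n)

/-- The initial density `d_n(X) = |X ∩ {0,…,n−1}|/n`. -/
noncomputable def dens (X : Set ℕ) (n : ℕ) : ℝ := (cnt X n : ℝ) / n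

/-- `X` is moderate: `0 < liminf d_n(X)` and `limsup d_n(X) < 1`. -/
def Moderate (X : Set ℕ) : Prop :=
  0 < Filter.liminf (fun n => dens X n) Filter.atTop ∧
    Filter.limsup (fun n => dens X n) Filter.atTop < 1

/-- A family `I` of infinite subsets of `ℕ` is `*`-independent if every member is
moderate and for every finite subfamily `F ⊆ I`,
`lim_{n→∞} d_n(⋂_{E∈F} E) / ∏_{E∈F} d_n(E) = 1`
(the empty intersection being `ℕ`). -/
def StarIndep (I : Set (Set ℕ)) : Prop :=
  (∀ X ∈ I, X.Infinite ∧ Moderate X) ∧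
  ∀ F : Finset (Set ℕ), ↑F ⊆ I →
    Filter.Tendsto (fun n => dens (⋂ E ∈ F, E) n / ∏ E ∈ F, dens E n)
      Filter.atTop (nhds 1)

/-- The ratio `d_l(⋂_{i∈E} B_i ∩ Y) / (∏_{i∈E} d_l(B_i) · d_l(Y))`. -/
noncomputable def ratio {n : ℕ} (B : Fin n → Set ℕ) (E : Finset (Fin n))
    (Y : Set ℕ) (l : ℕ) : ℝ :=
  dens ((⋂ i ∈ E, B i) ∩ Y) l / ((∏ i ∈ E, dens (B i) l) * dens Y l)

/-!
Partition `ℕ` into finitely many colour classes according to which members of the family contain a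
given number. From each class select roughly every `1/q`-th element, so that among the first `r`
elements of the class exactly `⌊q r⌋` are selected. The selected set `X` then meets every union `A`
of colour classes in `q |A ∩ [0, n)|` elements below `n`, up to an error bounded in `n`.
Finite intersections of members of the family are such unions, and their densities stay away from
`0`, so the error disappears in the limit of `d_n(A ∩ X) / (d_n(A) d_n(X))`.
-/

open Topology Asymptotics

section Counting

lemma cnt_zero (X : Set ℕ) : cnt X 0 = 0 := by
  simp [cnt]

open Classical in
lemma cnt_eq_count (X : Set ℕ) (n : ℕ) : cnt X n = Nat.count (· ∈ X) n := by
  have coe_filter : X ∩ Set.Iio n = ({k ∈ Finset.range n | k ∈ X} : Finset ℕ) := by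
    ext k
    simp [and_comm]
  rw [cnt, coe_filter, Nat.card_coe_set_eq, Set.ncard_coe_finset, Nat.count_eq_card_filter_range]

open Classical in
lemma cnt_succ (X : Set ℕ) (n : ℕ) : cnt X (n + 1) = cnt X n + if n ∈ X then 1 else 0 := by
  simp only [cnt_eq_count, Nat.count_succ]

lemma cnt_univ (n : ℕ) : cnt univ n = n := by
  simp [cnt]

lemma cnt_le_ncard {X : Set ℕ} (hX : X.Finite) (n : ℕ) : cnt X n ≤ X.ncard := by
  rw [cnt, Nat.card_coe_set_eq]
  exact Set.ncard_le_ncard inter_subset_left hX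

lemma cnt_preimage_inter {T : Type*} (c : ℕ → T) (S : Finset T) (X : Set ℕ) (n : ℕ) :
    cnt (c ⁻¹' S ∩ X) n = ∑ t ∈ S, cnt (c ⁻¹' {t} ∩ X) n := by
  classical
  induction n with
  | zero => simp [cnt_zero]
  | succ n ih =>
    by_cases hn : n ∈ X <;> simp [cnt_succ, Finset.sum_add_distrib, ih, hn]

end Counting

section Density

variable {X : Set ℕ} {q : ℝ}

lemma dens_nonneg (X : Set ℕ) (n : ℕ) : 0 ≤ dens X n := by
  unfold dens
  positivity

lemma dens_univ {n : ℕ} (hn : n ≠ 0) : dens univ n = 1 := by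
  rw [dens, cnt_univ, div_self (Nat.cast_ne_zero.mpr hn)]

lemma tendsto_dens_zero_of_finite (hX : X.Finite) : Tendsto (dens X) atTop (𝓝 0) := by
  refine squeeze_zero (dens_nonneg X) (fun n => ?_)
    (tendsto_const_div_atTop_nhds_zero_nat (X.ncard : ℝ))
  unfold dens
  gcongr
  exact cnt_le_ncard hX n

lemma infinite_of_tendsto_dens (hX : Tendsto (dens X) atTop (𝓝 q)) (hq : q ≠ 0) : X.Infinite :=
  fun hfin => hq (tendsto_nhds_unique hX (tendsto_dens_zero_of_finite hfin))

lemma moderate_of_tendsto_dens (hX : Tendsto (dens X) atTop (𝓝 q)) (hq0 : 0 < q) (hq1 : q < 1) :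
    Moderate X :=
  ⟨hX.liminf_eq.symm ▸ hq0, hX.limsup_eq.symm ▸ hq1⟩

lemma Moderate.isBigO_inv_dens (hX : Moderate X) :
    (fun n => (dens X n)⁻¹) =O[atTop] (fun _ => (1 : ℝ)) := by
  obtain ⟨a, ha, ha_lt⟩ := exists_between hX.1
  have ha_dens : ∀ᶠ n in atTop, a < dens X n :=
    eventually_lt_of_lt_liminf ha_lt (isBoundedUnder_of ⟨0, dens_nonneg X⟩)
  refine IsBigO.of_bound a⁻¹ (ha_dens.mono fun n hn => ?_)
  rw [norm_inv, Real.norm_of_nonneg (dens_nonneg X n), norm_one, mul_one]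
  exact inv_anti₀ ha hn.le

lemma isBigO_inv_prod_dens {F : Finset (Set ℕ)} (hF : ∀ E ∈ F, Moderate E) :
    (fun n => (∏ E ∈ F, dens E n)⁻¹) =O[atTop] (fun _ => (1 : ℝ)) := by
  simpa only [Finset.prod_inv_distrib, Finset.prod_const_one] using
    IsBigO.finsetProd fun E hE => (hF E hE).isBigO_inv_dens

end Density

/-- `X` takes up asymptotically the proportion `q` of the elements of `A`. The two densities are
compared by their difference, so `A` need not have an asymptotic density. -/
def SamplesAt (q : ℝ) (X A : Set ℕ) : Prop :=
  Tendsto (fun n => dens (A ∩ X) n - q * dens A n) atTop (𝓝 0)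

namespace SamplesAt

variable {q : ℝ} {X A : Set ℕ}

lemma of_abs_cnt_sub_le {C : ℝ} (h : ∀ n, |(cnt (A ∩ X) n : ℝ) - q * cnt A n| ≤ C) :
    SamplesAt q X A := by
  refine squeeze_zero_norm (fun n => ?_) (tendsto_const_div_atTop_nhds_zero_nat C)
  calc ‖dens (A ∩ X) n - q * dens A n‖
      = |(cnt (A ∩ X) n : ℝ) - q * cnt A n| / n := by
        rw [dens, dens, ← mul_div_assoc, ← sub_div, Real.norm_eq_abs, abs_div, Nat.abs_cast]
    _ ≤ C / n := by gcongr; exact h n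

lemma tendsto_dens (h : SamplesAt q X univ) : Tendsto (dens X) atTop (𝓝 q) := by
  rw [← tendsto_sub_nhds_zero_iff]
  refine h.congr' ?_
  filter_upwards [eventually_ne_atTop 0] with n hn
  rw [univ_inter, dens_univ hn, mul_one]

lemma tendsto_dens_div {P : ℕ → ℝ} {a : ℝ} (h : SamplesAt q X A)
    (hP : (fun n => (P n)⁻¹) =O[atTop] (fun _ => (1 : ℝ)))
    (hA : Tendsto (fun n => dens A n / P n) atTop (𝓝 a)) :
    Tendsto (fun n => dens (A ∩ X) n / P n) atTop (𝓝 (q * a)) := by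
  have error_tendsto :
      Tendsto (fun n => (dens (A ∩ X) n - q * dens A n) * (P n)⁻¹) atTop (𝓝 0) := by
    rw [← isLittleO_one_iff ℝ]
    simpa only [mul_one] using ((isLittleO_one_iff ℝ).mpr h).mul_isBigO hP
  have sum_tendsto := error_tendsto.add (hA.const_mul q)
  rw [zero_add] at sum_tendsto
  exact sum_tendsto.congr fun n => by ring

end SamplesAt

section Selection

variable {T : Type*} (c : ℕ → T) {q : ℝ}

/-- The set that selects from each colour class of `c` the fraction `q` of its elements as evenly
as possible: `k` is selected when passing from the elements of its class below `k` to those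
up to `k` raises `⌊q * r⌋`, where `r` is the number of elements. -/
def evenSelection (q : ℝ) : Set ℕ :=
  {k | ⌊q * cnt (c ⁻¹' {c k}) k⌋₊ < ⌊q * (cnt (c ⁻¹' {c k}) k + 1 : ℕ)⌋₊}

lemma natFloor_mul_succ (hq0 : 0 ≤ q) (hq1 : q ≤ 1) (r : ℕ) :
    ⌊q * (r + 1 : ℕ)⌋₊ = ⌊q * r⌋₊ + if ⌊q * r⌋₊ < ⌊q * (r + 1 : ℕ)⌋₊ then 1 else 0 := by
  have floor_mono : ⌊q * r⌋₊ ≤ ⌊q * (r + 1 : ℕ)⌋₊ := by gcongr; omega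
  have floor_le_succ : ⌊q * (r + 1 : ℕ)⌋₊ ≤ ⌊q * r⌋₊ + 1 := by
    rw [← Nat.floor_add_one (by positivity)]
    gcongr
    push_cast
    linarith
  split_ifs <;> omega

lemma cnt_preimage_singleton_inter_evenSelection (hq0 : 0 ≤ q) (hq1 : q ≤ 1) (t : T) (n : ℕ) :
    cnt (c ⁻¹' {t} ∩ evenSelection c q) n = ⌊q * cnt (c ⁻¹' {t}) n⌋₊ := by
  classical
  induction n with
  | zero => simp [cnt_zero]
  | succ n ih =>
    by_cases hn : c n = t
    · subst hn
      simp only [cnt_succ, ih, mem_inter_iff, mem_preimage, mem_singleton_iff, true_and, if_true]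
      rw [natFloor_mul_succ hq0 hq1]
      simp [evenSelection]
    · simp [cnt_succ, ih, hn]

lemma abs_cnt_preimage_inter_evenSelection_sub_le (hq0 : 0 ≤ q) (hq1 : q ≤ 1) (S : Finset T)
    (n : ℕ) :
    |(cnt (c ⁻¹' S ∩ evenSelection c q) n : ℝ) - q * cnt (c ⁻¹' S) n| ≤ S.card := by
  have class_error (t : T) :
      |(cnt (c ⁻¹' {t} ∩ evenSelection c q) n : ℝ) - q * cnt (c ⁻¹' {t}) n| ≤ 1 := by
    rw [cnt_preimage_singleton_inter_evenSelection c hq0 hq1, abs_sub_comm]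
    exact Nat.abs_sub_floor_le (by positivity)
  have cnt_preimage : cnt (c ⁻¹' S) n = ∑ t ∈ S, cnt (c ⁻¹' {t}) n := by
    simpa only [inter_univ] using cnt_preimage_inter c S univ n
  rw [cnt_preimage_inter, cnt_preimage, Nat.cast_sum, Nat.cast_sum, Finset.mul_sum,
    ← Finset.sum_sub_distrib]
  calc _ ≤ ∑ t ∈ S, |(cnt (c ⁻¹' {t} ∩ evenSelection c q) n : ℝ) - q * cnt (c ⁻¹' {t}) n| :=
        Finset.abs_sum_le_sum_abs _ _
    _ ≤ ∑ _t ∈ S, 1 := Finset.sum_le_sum fun t _ => class_error t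
    _ = S.card := by simp

lemma samplesAt_evenSelection [Finite T] (hq0 : 0 ≤ q) (hq1 : q ≤ 1) (S : Set T) :
    SamplesAt q (evenSelection c q) (c ⁻¹' S) := by
  lift S to Finset T using S.toFinite
  exact .of_abs_cnt_sub_le (abs_cnt_preimage_inter_evenSelection_sub_le c hq0 hq1 S)

lemma exists_samplesAt_biInter {I : Set (Set ℕ)} (hI : I.Finite) (hq0 : 0 ≤ q) (hq1 : q ≤ 1) :
    ∃ X : Set ℕ, ∀ F ⊆ I, SamplesAt q X (⋂ E ∈ F, E) := by
  have : Finite I := hI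
  let memberships (k : ℕ) : Set I := {E | k ∈ E.1}
  refine ⟨evenSelection memberships q, fun F hF => ?_⟩
  have biInter_eq_preimage : ⋂ E ∈ F, E = memberships ⁻¹' {t | ∀ E : I, E.1 ∈ F → E ∈ t} := by
    ext k
    simp only [mem_iInter, mem_preimage, memberships]
    exact ⟨fun h E => h E, fun h E hE => h ⟨E, hF hE⟩ hE⟩
  rw [biInter_eq_preimage]
  exact samplesAt_evenSelection memberships hq0 hq1 _

end Selection

lemma StarIndep.insert_of_samplesAt {I : Set (Set ℕ)} {X : Set ℕ} {q : ℝ} (hI : StarIndep I)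
    (hq0 : 0 < q) (hq1 : q < 1)
    (hX : ∀ F : Finset (Set ℕ), ↑F ⊆ I → SamplesAt q X (⋂ E ∈ F, E)) :
    StarIndep (insert X I) := by
  classical
  have dens_tendsto : Tendsto (dens X) atTop (𝓝 q) :=
    SamplesAt.tendsto_dens (by simpa using hX ∅ (by simp))
  refine ⟨forall_mem_insert.mpr ⟨⟨infinite_of_tendsto_dens dens_tendsto hq0.ne',
    moderate_of_tendsto_dens dens_tendsto hq0 hq1⟩, hI.1⟩, fun F hF => ?_⟩
  by_cases hXF : X ∈ F
  · obtain ⟨G, hXG, rfl⟩ : ∃ G, X ∉ G ∧ insert X G = F :=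
      ⟨F.erase X, Finset.notMem_erase X F, Finset.insert_erase hXF⟩
    have hG : ↑G ⊆ I := by
      rw [Finset.coe_insert, insert_subset_insert_iff (by exact_mod_cast hXG)] at hF
      exact hF
    have ratio_tendsto := ((hX G hG).tendsto_dens_div
      (isBigO_inv_prod_dens fun E hE => (hI.1 E (hG hE)).2) (hI.2 G hG)).div dens_tendsto hq0.ne'
    rw [mul_one, div_self hq0.ne'] at ratio_tendsto
    refine ratio_tendsto.congr fun n => ?_
    rw [Pi.div_apply, Finset.set_biInter_insert, inter_comm X, Finset.prod_insert hXG, mul_comm,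
      div_div]
  · exact hI.2 F ((subset_insert_iff_of_notMem (by exact_mod_cast hXF)).mp hF)

theorem extend_star_independent_general {I : Set (Set ℕ)} (hfin : I.Finite) (hI : StarIndep I)
    {q : ℝ} (hq0 : 0 < q) (hq1 : q < 1) :
    ∃ X : Set ℕ, X.Infinite ∧ Tendsto (dens X) atTop (𝓝 q) ∧ StarIndep (insert X I) := by
  obtain ⟨X, hX⟩ := exists_samplesAt_biInter hfin hq0.le hq1.le
  have dens_tendsto : Tendsto (dens X) atTop (𝓝 q) :=
    SamplesAt.tendsto_dens (by simpa using hX ∅ (empty_subset I))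
  exact ⟨X, infinite_of_tendsto_dens dens_tendsto hq0.ne', dens_tendsto,
    hI.insert_of_samplesAt hq0 hq1 fun F hF => hX F hF⟩

/-- For any finite `*`-independent family `ℬ = {B_0,…,B_{n−1}}` and any rational
`q` with `0 < q < 1`, there is an infinite set `X_q ⊆ ℕ` of asymptotic density
`q` such that `ℬ ∪ {X_q}` is a `*`-independent family. -/
theorem extend_star_independent (n : ℕ) (B : Fin n → Set ℕ)
    (hB : StarIndep (Set.range B)) (q : ℚ) (hq0 : 0 < q) (hq1 : q < 1) :
    ∃ X : Set ℕ, X.Infinite ∧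
      Filter.Tendsto (fun l => dens X l) Filter.atTop (nhds (q : ℝ)) ∧
      StarIndep (insert X (Set.range B)) := by
  exact extend_star_independent_general (finite_range B) hB (by exact_mod_cast hq0)
    (by exact_mod_cast hq1)
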